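/- (Great icosahedron algebraic solution of PVIμ, μ = −1/5) Define P(s) = 9 − 342s² + 4855s⁴ − 28852s⁶ + 63015s⁸ − 1942s¹⁰ + 121s¹², and the rational functions x(s) = (s−1)⁵(1+3s)³(−1+4s+s²)/((1+s)⁵(−1+3s)³(−1−4s+s²)) and y(s) = (s−1)⁴(1+3s)²(−1+4s+s²)(3−30s²+11s⁴)²/((1+s)(−1+3s)(1+3s²)P(s)). Then for every s ∈ ℂ at which all the denominators involved are nonzero, x'(s) ≠ 0, x(s) ∉ {0,1}, and y(s) ∉ {0, 1, x(s)}, the pair (x(s), y(s)) satisfies the Painlevé VI equation PVIμ with μ = −1/5 parametrically: setting Y₁ = y'(s)/x'(s) and Y₂ = (y''(s)x'(s) − y'(s)x''(s))/x'(s)³, one has Y₂ = (1/2)(1/y(s) + 1/(y(s)−1) + 1/(y(s)−x(s)))Y₁² − (1/x(s) + 1/(x(s)−1) + 1/(y(s)−x(s)))Y₁ + (1/2)·y(s)(y(s)−1)(y(s)−x(s))/(x(s)²(x(s)−1)²)·[49/25 + x(s)(x(s)−1)/(y(s)−x(s))²]. -/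

import Mathlib

/-- The polynomial `P(s)` of the great icosahedron solution. -/
noncomputable def greatIcosaP : ℂ → ℂ := fun s =>
  9 - 342 * s ^ 2 + 4855 * s ^ 4 - 28852 * s ^ 6 + 63015 * s ^ 8 -
    1942 * s ^ 10 + 121 * s ^ 12

/-- The parametrization `x(s)` of the great icosahedron solution. -/
noncomputable def greatIcosaX : ℂ → ℂ := fun s =>
  (s - 1) ^ 5 * (1 + 3 * s) ^ 3 * (-1 + 4 * s + s ^ 2) /
    ((1 + s) ^ 5 * (-1 + 3 * s) ^ 3 * (-1 - 4 * s + s ^ 2))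

/-- The parametrization `y(s)` of the great icosahedron solution. -/
noncomputable def greatIcosaY : ℂ → ℂ := fun s =>
  (s - 1) ^ 4 * (1 + 3 * s) ^ 2 * (-1 + 4 * s + s ^ 2) *
      (3 - 30 * s ^ 2 + 11 * s ^ 4) ^ 2 /
    ((1 + s) * (-1 + 3 * s) * (1 + 3 * s ^ 2) * greatIcosaP s)

/-- The nontrivial factor of the numerator of `y'(s)`. -/
noncomputable def greatIcosaQ : ℂ → ℂ := fun s =>
  6 + 111 * s - 3 * s ^ 2 - 5952 * s ^ 3 - 568 * s ^ 4 + 101500 * s ^ 5 + 27748 * s ^ 6 -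
    815472 * s ^ 7 - 552076 * s ^ 8 + 3393362 * s ^ 9 + 3693158 * s ^ 10 - 5827360 * s ^ 11 -
    8626072 * s ^ 12 - 768852 * s ^ 13 + 2052628 * s ^ 14 + 2172496 * s ^ 15 +
    455894 * s ^ 16 - 19305 * s ^ 17 + 165 * s ^ 18

/-- The derivative of `greatIcosaP`. -/
noncomputable def greatIcosaP' : ℂ → ℂ := fun s =>
  -684 * s + 19420 * s ^ 3 - 173112 * s ^ 5 + 504120 * s ^ 7 - 19420 * s ^ 9 + 1452 * s ^ 11

/-- The derivative of `greatIcosaQ`. -/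
noncomputable def greatIcosaQ' : ℂ → ℂ := fun s =>
  111 - 6 * s - 17856 * s ^ 2 - 2272 * s ^ 3 + 507500 * s ^ 4 + 166488 * s ^ 5 -
    5708304 * s ^ 6 - 4416608 * s ^ 7 + 30540258 * s ^ 8 + 36931580 * s ^ 9 -
    64100960 * s ^ 10 - 103512864 * s ^ 11 - 9995076 * s ^ 12 + 28736792 * s ^ 13 +
    32587440 * s ^ 14 + 7294304 * s ^ 15 - 328185 * s ^ 16 + 2970 * s ^ 17

/-- The nontrivial factor of the numerator of the derivative of `y'(s) / x'(s)`. -/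
noncomputable def greatIcosaR : ℂ → ℂ := fun s =>
  (((-60 * s + 44 * s ^ 3) * greatIcosaQ s +
        (3 - 30 * s ^ 2 + 11 * s ^ 4) * greatIcosaQ' s) *
        ((1 + s) * (-1 + 3 * s) * (-1 - 4 * s + s ^ 2)) +
      (3 - 30 * s ^ 2 + 11 * s ^ 4) * greatIcosaQ s *
        (4 * (-1 + 3 * s) * (-1 - 4 * s + s ^ 2) + 6 * (1 + s) * (-1 - 4 * s + s ^ 2) +
          2 * (1 + s) * (-1 + 3 * s) * (-4 + 2 * s))) *
      (s * (s - 1) * (1 + 3 * s) * (1 + 3 * s ^ 2) * greatIcosaP s) -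
    (3 - 30 * s ^ 2 + 11 * s ^ 4) * greatIcosaQ s *
      ((1 + s) * (-1 + 3 * s) * (-1 - 4 * s + s ^ 2)) *
      (((s - 1) * (1 + 3 * s) + s * (1 + 3 * s) + 3 * s * (s - 1)) *
          ((1 + 3 * s ^ 2) * greatIcosaP s) +
        2 * s * (s - 1) * (1 + 3 * s) *
          (6 * s * greatIcosaP s + (1 + 3 * s ^ 2) * greatIcosaP' s))

theorem HasDerivAt.congr_fun_deriv {f g : ℂ → ℂ} {df dg s : ℂ} (h : HasDerivAt g dg s)
    (hf : ∀ t, f t = g t) (hd : df = dg) : HasDerivAt f df s := by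
  rwa [funext hf, hd]

theorem hasDerivAt_greatIcosaP (s : ℂ) : HasDerivAt greatIcosaP (greatIcosaP' s) s := by
  refine (9 - 342 * .X ^ 2 + 4855 * .X ^ 4 - 28852 * .X ^ 6 + 63015 * .X ^ 8 -
    1942 * .X ^ 10 + 121 * .X ^ 12 : Polynomial ℂ).hasDerivAt s |>.congr_fun_deriv
      (fun t => by simp [greatIcosaP]) ?_
  simp [greatIcosaP']
  ring

theorem hasDerivAt_greatIcosaQ (s : ℂ) : HasDerivAt greatIcosaQ (greatIcosaQ' s) s := by
  refine (6 + 111 * .X - 3 * .X ^ 2 - 5952 * .X ^ 3 - 568 * .X ^ 4 + 101500 * .X ^ 5 +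
    27748 * .X ^ 6 - 815472 * .X ^ 7 - 552076 * .X ^ 8 + 3393362 * .X ^ 9 +
    3693158 * .X ^ 10 - 5827360 * .X ^ 11 - 8626072 * .X ^ 12 - 768852 * .X ^ 13 +
    2052628 * .X ^ 14 + 2172496 * .X ^ 15 + 455894 * .X ^ 16 - 19305 * .X ^ 17 +
    165 * .X ^ 18 : Polynomial ℂ).hasDerivAt s |>.congr_fun_deriv
      (fun t => by simp [greatIcosaQ]) ?_
  simp [greatIcosaQ']
  ring

theorem hasDerivAt_affine (a b s : ℂ) : HasDerivAt (fun t => a + b * t) b s := by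
  simpa using ((hasDerivAt_id s).const_mul b).const_add a

theorem hasDerivAt_one_add (s : ℂ) : HasDerivAt (fun t : ℂ => 1 + t) 1 s :=
  (hasDerivAt_id s).const_add 1

theorem hasDerivAt_sub_one (s : ℂ) : HasDerivAt (fun t : ℂ => t - 1) 1 s :=
  (hasDerivAt_id s).sub_const 1

theorem hasDerivAt_quadratic (a b c s : ℂ) :
    HasDerivAt (fun t => a + b * t + c * t ^ 2) (b + 2 * c * s) s :=
  ((hasDerivAt_affine a b s).fun_add ((hasDerivAt_pow 2 s).const_mul c)).congr_deriv
    (by push_cast; ring)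

theorem hasDerivAt_neg_one_add_four_mul_add_sq (s : ℂ) :
    HasDerivAt (fun t : ℂ => -1 + 4 * t + t ^ 2) (4 + 2 * s) s :=
  (hasDerivAt_quadratic (-1) 4 1 s).congr_fun_deriv (fun t => by ring) (by ring)

theorem hasDerivAt_neg_one_sub_four_mul_add_sq (s : ℂ) :
    HasDerivAt (fun t : ℂ => -1 - 4 * t + t ^ 2) (-4 + 2 * s) s :=
  (hasDerivAt_quadratic (-1) (-4) 1 s).congr_fun_deriv (fun t => by ring) (by ring)

theorem hasDerivAt_one_add_three_mul_sq (s : ℂ) :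
    HasDerivAt (fun t : ℂ => 1 + 3 * t ^ 2) (6 * s) s :=
  (hasDerivAt_quadratic 1 0 3 s).congr_fun_deriv (fun t => by ring) (by ring)

theorem hasDerivAt_quartic (s : ℂ) :
    HasDerivAt (fun t : ℂ => 3 - 30 * t ^ 2 + 11 * t ^ 4) (-60 * s + 44 * s ^ 3) s :=
  ((hasDerivAt_quadratic 3 0 (-30) s).fun_add
    ((hasDerivAt_pow 4 s).const_mul 11)).congr_fun_deriv (fun t => by ring) (by push_cast; ring)

theorem hasDerivAt_greatIcosaX {s : ℂ}
    (hden : (1 + s) ^ 5 * (-1 + 3 * s) ^ 3 * (-1 - 4 * s + s ^ 2) ≠ 0) :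
    HasDerivAt greatIcosaX (-1280 * s ^ 4 * (s - 1) ^ 4 * (1 + 3 * s) ^ 2 /
      ((1 + s) ^ 6 * (-1 + 3 * s) ^ 4 * (-1 - 4 * s + s ^ 2) ^ 2)) s := by
  have h := ((((hasDerivAt_sub_one s).fun_pow 5).fun_mul
    ((hasDerivAt_affine 1 3 s).fun_pow 3)).fun_mul
    (hasDerivAt_neg_one_add_four_mul_add_sq s)).fun_div
    ((((hasDerivAt_one_add s).fun_pow 5).fun_mul ((hasDerivAt_affine (-1) 3 s).fun_pow 3)).fun_mul
      (hasDerivAt_neg_one_sub_four_mul_add_sq s)) hden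
  refine h.congr_deriv ?_
  have h1 : (1 + s) ≠ 0 := by intro h; simp [h] at hden
  have h2 : (-1 + 3 * s) ≠ 0 := by intro h; simp [h] at hden
  have h3 : (-1 - 4 * s + s ^ 2) ≠ 0 := by intro h; simp [h] at hden
  rw [div_eq_div_iff (pow_ne_zero 2 hden)
    (mul_ne_zero (mul_ne_zero (pow_ne_zero 6 h1) (pow_ne_zero 4 h2)) (pow_ne_zero 2 h3))]
  push_cast
  ring

theorem hasDerivAt_greatIcosaY {s : ℂ}
    (hden : (1 + s) * (-1 + 3 * s) * (1 + 3 * s ^ 2) * greatIcosaP s ≠ 0) :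
    HasDerivAt greatIcosaY (128 * s ^ 3 * (s - 1) ^ 3 * (1 + 3 * s) *
      (3 - 30 * s ^ 2 + 11 * s ^ 4) * greatIcosaQ s /
      ((1 + s) * (-1 + 3 * s) * (1 + 3 * s ^ 2) * greatIcosaP s) ^ 2) s := by
  have h := (((((hasDerivAt_sub_one s).fun_pow 4).fun_mul
    ((hasDerivAt_affine 1 3 s).fun_pow 2)).fun_mul
    (hasDerivAt_neg_one_add_four_mul_add_sq s)).fun_mul
    ((hasDerivAt_quartic s).fun_pow 2)).fun_div
    ((((hasDerivAt_one_add s).fun_mul (hasDerivAt_affine (-1) 3 s)).fun_mul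
      (hasDerivAt_one_add_three_mul_sq s)).fun_mul
      (hasDerivAt_greatIcosaP s)) hden
  refine h.congr_deriv ?_
  congr 1
  simp only [greatIcosaP, greatIcosaP', greatIcosaQ]
  push_cast
  ring

/-- The quotient `y'(s) / x'(s)` in factored form. -/
noncomputable def greatIcosaSlope : ℂ → ℂ := fun s =>
  -(1 / 10) * ((3 - 30 * s ^ 2 + 11 * s ^ 4) * greatIcosaQ s *
    ((1 + s) ^ 4 * (-1 + 3 * s) ^ 2 * (-1 - 4 * s + s ^ 2) ^ 2) /
    (s * (s - 1) * (1 + 3 * s) * ((1 + 3 * s ^ 2) ^ 2 * greatIcosaP s ^ 2)))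

theorem hasDerivAt_greatIcosaSlope {s : ℂ} (h0 : s ≠ 0) (ha : s - 1 ≠ 0) (hb : 1 + 3 * s ≠ 0)
    (hq : 1 + 3 * s ^ 2 ≠ 0) (hP : greatIcosaP s ≠ 0) :
    HasDerivAt greatIcosaSlope (-(1 / 10) * (greatIcosaR s *
      ((1 + s) ^ 3 * (-1 + 3 * s) * (-1 - 4 * s + s ^ 2)) /
      (s ^ 2 * (s - 1) ^ 2 * (1 + 3 * s) ^ 2 * (1 + 3 * s ^ 2) ^ 3 * greatIcosaP s ^ 3))) s := by
  have hden : s * (s - 1) * (1 + 3 * s) * ((1 + 3 * s ^ 2) ^ 2 * greatIcosaP s ^ 2) ≠ 0 := by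
    simp [*]
  have h := ((((hasDerivAt_quartic s).fun_mul (hasDerivAt_greatIcosaQ s)).fun_mul
    ((((hasDerivAt_one_add s).fun_pow 4).fun_mul ((hasDerivAt_affine (-1) 3 s).fun_pow 2)).fun_mul
      ((hasDerivAt_neg_one_sub_four_mul_add_sq s).fun_pow 2))).fun_div
    ((((hasDerivAt_id' s).fun_mul (hasDerivAt_sub_one s)).fun_mul
      (hasDerivAt_affine 1 3 s)).fun_mul (((hasDerivAt_one_add_three_mul_sq s).fun_pow 2).fun_mul
        ((hasDerivAt_greatIcosaP s).fun_pow 2))) hden).const_mul (-(1 / 10))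
  refine h.congr_deriv ?_
  congr 1
  rw [div_eq_div_iff (pow_ne_zero 2 hden) (by simp [*])]
  simp only [greatIcosaR]
  generalize greatIcosaP s = P
  generalize greatIcosaQ s = Q
  generalize greatIcosaP' s = dP
  generalize greatIcosaQ' s = dQ
  generalize 3 - 30 * s ^ 2 + 11 * s ^ 4 = f
  push_cast
  ring

/-- If `y' = x' p` near `s`, the parametric second derivative of `y` with respect to `x` is
`p'(s) / x'(s)`. -/
theorem parametric_second_deriv {x y x₁ p : ℂ → ℂ} {s p' : ℂ}
    (hx : ∀ᶠ t in nhds s, HasDerivAt x (x₁ t) t)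
    (hy : ∀ᶠ t in nhds s, HasDerivAt y (x₁ t * p t) t)
    (hx₁ : DifferentiableAt ℂ x₁ s) (hp : HasDerivAt p p' s) (hne : x₁ s ≠ 0) :
    (deriv (deriv y) s * deriv x s - deriv y s * deriv (deriv x) s) / deriv x s ^ 3 =
      p' / x₁ s := by
  have hdx : deriv x =ᶠ[nhds s] x₁ := hx.mono fun t ht => ht.deriv
  have hdy : deriv y =ᶠ[nhds s] fun t => x₁ t * p t := hy.mono fun t ht => ht.deriv
  rw [hdx.deriv_eq, hdy.deriv_eq, hdx.eq_of_nhds, hdy.eq_of_nhds,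
    (hx₁.hasDerivAt.fun_mul hp).deriv]
  field_simp
  ring

/-- The Painlevé VI equation for the factored solution, cleared of denominators. -/
theorem greatIcosa_numerator_identity (s : ℂ) {a b c d e f g h j u v P Q : ℂ}
    (ha : a = s - 1) (hb : b = 1 + 3 * s) (hc : c = -1 + 4 * s + s ^ 2) (hd : d = 1 + s)
    (he : e = -1 + 3 * s) (hf : f = -1 - 4 * s + s ^ 2) (hg : g = 3 - 30 * s ^ 2 + 11 * s ^ 4)
    (hh : h = 1 + 3 * s ^ 2) (hj : j = 1 - 5 * s ^ 2)
    (hu : u = 1 - 8 * s - 18 * s ^ 2 + 40 * s ^ 3 + s ^ 4)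
    (hv : v = 1 + 8 * s - 18 * s ^ 2 - 40 * s ^ 3 + s ^ 4)
    (hP : P = greatIcosaP s) (hQ : Q = greatIcosaQ s) :
    greatIcosaR s * c * j * u ^ 2 * v ^ 2 =
      64 * Q ^ 2 * f * s ^ 4 * j * u ^ 2 * v ^ 2 + f * g ^ 2 * Q ^ 2 * a ^ 4 * b ^ 2 * c * u ^ 2 +
      g ^ 2 * Q ^ 2 * d ^ 4 * e ^ 2 * f ^ 2 * v ^ 2 +
      1280 * g * Q * s ^ 5 * j * u ^ 2 * v ^ 2 * h * P -
      5 * g * Q * a ^ 5 * b ^ 3 * c * u ^ 2 * v ^ 2 * h * P +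
      20 * g * Q * s * a * b * v ^ 2 * h ^ 2 * P ^ 2 +
      784 * g ^ 2 * u ^ 4 * v ^ 4 * s ^ 4 * a ^ 4 * b ^ 2 * c * j * d ^ 4 * e ^ 2 -
      25 * g ^ 2 * v ^ 4 * s * a * b * h ^ 2 * P ^ 2 * d ^ 4 * e ^ 2 := by
  subst ha hb hc hd he hf hg hh hj hu hv hP hQ
  simp only [greatIcosaR, greatIcosaP, greatIcosaQ, greatIcosaP', greatIcosaQ']
  ring

/-- The Painlevé VI equation with `49/25`, for `x`, `y`, `y'(x)` and `y''(x)` given in factored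
form, follows from the polynomial identity between the factors. -/
theorem painleveVI_of_factored {K : Type*} [Field K] [CharZero K]
    {x y Y₁ Y₂ s a b c d e f g h j u v P Q R : K}
    (hs : s ≠ 0) (ha : a ≠ 0) (hb : b ≠ 0) (hc : c ≠ 0) (hd : d ≠ 0) (he : e ≠ 0) (hf : f ≠ 0)
    (hg : g ≠ 0) (hh : h ≠ 0) (hj : j ≠ 0) (hu : u ≠ 0) (hv : v ≠ 0) (hP : P ≠ 0)
    (hx : x = a ^ 5 * b ^ 3 * c / (d ^ 5 * e ^ 3 * f))
    (hx1 : x - 1 = -256 * s ^ 5 * j / (d ^ 5 * e ^ 3 * f))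
    (hy : y = a ^ 4 * b ^ 2 * c * g ^ 2 / (d * e * h * P))
    (hy1 : y - 1 = 64 * s ^ 4 * j * v ^ 2 / (d * e * h * P))
    (hyx : y - x = 64 * s ^ 4 * a ^ 4 * b ^ 2 * c * j * u ^ 2 / (d ^ 5 * e ^ 3 * f * h * P))
    (hY₁ : Y₁ = -(1 / 10) * (g * Q * (d ^ 4 * e ^ 2 * f ^ 2) / (s * a * b * (h ^ 2 * P ^ 2))))
    (hY₂ : Y₂ = R * d ^ 9 * e ^ 5 * f ^ 3 / (12800 * s ^ 6 * a ^ 6 * b ^ 4 * h ^ 3 * P ^ 3))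
    (key : R * c * j * u ^ 2 * v ^ 2 =
      64 * Q ^ 2 * f * s ^ 4 * j * u ^ 2 * v ^ 2 + f * g ^ 2 * Q ^ 2 * a ^ 4 * b ^ 2 * c * u ^ 2 +
      g ^ 2 * Q ^ 2 * d ^ 4 * e ^ 2 * f ^ 2 * v ^ 2 +
      1280 * g * Q * s ^ 5 * j * u ^ 2 * v ^ 2 * h * P -
      5 * g * Q * a ^ 5 * b ^ 3 * c * u ^ 2 * v ^ 2 * h * P +
      20 * g * Q * s * a * b * v ^ 2 * h ^ 2 * P ^ 2 +
      784 * g ^ 2 * u ^ 4 * v ^ 4 * s ^ 4 * a ^ 4 * b ^ 2 * c * j * d ^ 4 * e ^ 2 -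
      25 * g ^ 2 * v ^ 4 * s * a * b * h ^ 2 * P ^ 2 * d ^ 4 * e ^ 2) :
    Y₂ = (1 / 2) * (1 / y + 1 / (y - 1) + 1 / (y - x)) * Y₁ ^ 2
      - (1 / x + 1 / (x - 1) + 1 / (y - x)) * Y₁
      + (1 / 2) * (y * (y - 1) * (y - x) / (x ^ 2 * (x - 1) ^ 2)) *
          (49 / 25 + x * (x - 1) / (y - x) ^ 2) := by
  have hR : R = (64 * Q ^ 2 * f * s ^ 4 * j * u ^ 2 * v ^ 2 +
      f * g ^ 2 * Q ^ 2 * a ^ 4 * b ^ 2 * c * u ^ 2 +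
      g ^ 2 * Q ^ 2 * d ^ 4 * e ^ 2 * f ^ 2 * v ^ 2 +
      1280 * g * Q * s ^ 5 * j * u ^ 2 * v ^ 2 * h * P -
      5 * g * Q * a ^ 5 * b ^ 3 * c * u ^ 2 * v ^ 2 * h * P +
      20 * g * Q * s * a * b * v ^ 2 * h ^ 2 * P ^ 2 +
      784 * g ^ 2 * u ^ 4 * v ^ 4 * s ^ 4 * a ^ 4 * b ^ 2 * c * j * d ^ 4 * e ^ 2 -
      25 * g ^ 2 * v ^ 4 * s * a * b * h ^ 2 * P ^ 2 * d ^ 4 * e ^ 2) /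
      (c * j * u ^ 2 * v ^ 2) := by
    rw [← key]
    field_simp
  rw [hY₁, hY₂, hyx, hx1, hy1, hx, hy, hR]
  field_simp
  ring

/-- The pair `(x(s), y(s))` is an algebraic solution of PVIμ with
`μ = -1/5` (so `(2μ-1)² = 49/25`), parametrically: with `Y₁ = y'(s)/x'(s)` and
`Y₂ = (y''(s)x'(s) - y'(s)x''(s))/x'(s)³`, the Painlevé VI equation holds at every
parameter value `s` where the denominators are nonzero, `x'(s) ≠ 0`, `x(s) ∉ {0,1}`
and `y(s) ∉ {0, 1, x(s)}`. -/
theorem great_icosahedron_solves_PVI (s : ℂ)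
    (hden1 : (1 + s) ^ 5 * (-1 + 3 * s) ^ 3 * (-1 - 4 * s + s ^ 2) ≠ 0)
    (hden2 : (1 + s) * (-1 + 3 * s) * (1 + 3 * s ^ 2) * greatIcosaP s ≠ 0)
    (hdx : deriv greatIcosaX s ≠ 0)
    (hx0 : greatIcosaX s ≠ 0) (hx1 : greatIcosaX s ≠ 1)
    (hy0 : greatIcosaY s ≠ 0) (hy1 : greatIcosaY s ≠ 1)
    (hyx : greatIcosaY s ≠ greatIcosaX s) :
    (deriv (deriv greatIcosaY) s * deriv greatIcosaX s -
        deriv greatIcosaY s * deriv (deriv greatIcosaX) s) /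
        (deriv greatIcosaX s) ^ 3 =
      (1 / 2) * (1 / greatIcosaY s + 1 / (greatIcosaY s - 1) +
          1 / (greatIcosaY s - greatIcosaX s)) *
          (deriv greatIcosaY s / deriv greatIcosaX s) ^ 2
      - (1 / greatIcosaX s + 1 / (greatIcosaX s - 1) +
          1 / (greatIcosaY s - greatIcosaX s)) *
          (deriv greatIcosaY s / deriv greatIcosaX s)
      + (1 / 2) * (greatIcosaY s * (greatIcosaY s - 1) *
          (greatIcosaY s - greatIcosaX s) /
          ((greatIcosaX s) ^ 2 * (greatIcosaX s - 1) ^ 2)) *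
          (49 / 25 + greatIcosaX s * (greatIcosaX s - 1) /
            (greatIcosaY s - greatIcosaX s) ^ 2) := by
  obtain ⟨⟨⟨hd, he⟩, hh⟩, hP⟩ : (((1 + s ≠ 0) ∧ (-1 + 3 * s ≠ 0)) ∧ (1 + 3 * s ^ 2 ≠ 0)) ∧
      greatIcosaP s ≠ 0 := by
    simpa only [mul_ne_zero_iff] using hden2
  have hf : -1 - 4 * s + s ^ 2 ≠ 0 := right_ne_zero_of_mul hden1
  have hx : greatIcosaX s = (s - 1) ^ 5 * (1 + 3 * s) ^ 3 * (-1 + 4 * s + s ^ 2) /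
    ((1 + s) ^ 5 * (-1 + 3 * s) ^ 3 * (-1 - 4 * s + s ^ 2)) := rfl
  have hy : greatIcosaY s = (s - 1) ^ 4 * (1 + 3 * s) ^ 2 * (-1 + 4 * s + s ^ 2) *
      (3 - 30 * s ^ 2 + 11 * s ^ 4) ^ 2 /
    ((1 + s) * (-1 + 3 * s) * (1 + 3 * s ^ 2) * greatIcosaP s) := rfl
  have hx1' : greatIcosaX s - 1 = -256 * s ^ 5 * (1 - 5 * s ^ 2) /
      ((1 + s) ^ 5 * (-1 + 3 * s) ^ 3 * (-1 - 4 * s + s ^ 2)) := by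
    rw [hx, div_sub_one hden1]
    congr 1
    ring
  have hy1' : greatIcosaY s - 1 = 64 * s ^ 4 * (1 - 5 * s ^ 2) *
      (1 + 8 * s - 18 * s ^ 2 - 40 * s ^ 3 + s ^ 4) ^ 2 /
      ((1 + s) * (-1 + 3 * s) * (1 + 3 * s ^ 2) * greatIcosaP s) := by
    rw [hy, div_sub_one hden2]
    congr 1
    simp only [greatIcosaP]
    ring
  have hyx' : greatIcosaY s - greatIcosaX s = 64 * s ^ 4 * (s - 1) ^ 4 * (1 + 3 * s) ^ 2 *
      (-1 + 4 * s + s ^ 2) * (1 - 5 * s ^ 2) *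
      (1 - 8 * s - 18 * s ^ 2 + 40 * s ^ 3 + s ^ 4) ^ 2 /
      ((1 + s) ^ 5 * (-1 + 3 * s) ^ 3 * (-1 - 4 * s + s ^ 2) * (1 + 3 * s ^ 2) *
        greatIcosaP s) := by
    rw [hy, hx, div_sub_div _ _ hden2 hden1, div_eq_div_iff (mul_ne_zero hden2 hden1)
      (mul_ne_zero (mul_ne_zero hden1 hh) hP)]
    simp only [greatIcosaP]
    ring
  have h0 : s ≠ 0 := by
    intro h
    exact sub_ne_zero.2 hx1 (by rw [hx1', h]; simp)
  have hj : 1 - 5 * s ^ 2 ≠ 0 := by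
    intro h
    exact sub_ne_zero.2 hx1 (by simp [hx1', h])
  have hv : 1 + 8 * s - 18 * s ^ 2 - 40 * s ^ 3 + s ^ 4 ≠ 0 := by
    intro h
    exact sub_ne_zero.2 hy1 (by simp [hy1', h])
  have hu : 1 - 8 * s - 18 * s ^ 2 + 40 * s ^ 3 + s ^ 4 ≠ 0 := by
    intro h
    exact sub_ne_zero.2 hyx (by simp [hyx', h])
  have ha : s - 1 ≠ 0 := by
    intro h
    exact hx0 (by simp [hx, h])
  have hb : 1 + 3 * s ≠ 0 := by
    intro h
    exact hx0 (by simp [hx, h])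
  have hc : -1 + 4 * s + s ^ 2 ≠ 0 := by
    intro h
    exact hx0 (by simp [hx, h])
  have hg : 3 - 30 * s ^ 2 + 11 * s ^ 4 ≠ 0 := by
    intro h
    exact hy0 (by simp [hy, h])
  have hPcont : ContinuousAt greatIcosaP s := (hasDerivAt_greatIcosaP s).continuousAt
  have hX : ∀ᶠ t in nhds s, HasDerivAt greatIcosaX (-1280 * t ^ 4 * (t - 1) ^ 4 *
      (1 + 3 * t) ^ 2 / ((1 + t) ^ 6 * (-1 + 3 * t) ^ 4 * (-1 - 4 * t + t ^ 2) ^ 2)) t := by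
    have hcont : ContinuousAt
        (fun t : ℂ => (1 + t) ^ 5 * (-1 + 3 * t) ^ 3 * (-1 - 4 * t + t ^ 2)) s := by fun_prop
    filter_upwards [hcont.eventually_ne hden1] with t ht using hasDerivAt_greatIcosaX ht
  have hY : ∀ᶠ t in nhds s, HasDerivAt greatIcosaY (-1280 * t ^ 4 * (t - 1) ^ 4 *
      (1 + 3 * t) ^ 2 / ((1 + t) ^ 6 * (-1 + 3 * t) ^ 4 * (-1 - 4 * t + t ^ 2) ^ 2) *
      greatIcosaSlope t) t := by
    have hcont : ContinuousAt (fun t : ℂ => t * (t - 1) * (1 + 3 * t) * (-1 - 4 * t + t ^ 2) *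
        ((1 + t) * (-1 + 3 * t) * (1 + 3 * t ^ 2) * greatIcosaP t)) s := by fun_prop
    filter_upwards [hcont.eventually_ne (mul_ne_zero
      (mul_ne_zero (mul_ne_zero (mul_ne_zero h0 ha) hb) hf) hden2)] with t ht
    refine (hasDerivAt_greatIcosaY (right_ne_zero_of_mul ht)).congr_deriv ?_
    simp only [mul_ne_zero_iff] at ht
    obtain ⟨⟨⟨⟨h0, ha⟩, hb⟩, hf⟩, ⟨⟨hd, he⟩, hh⟩, hP⟩ := ht
    simp only [greatIcosaSlope]
    generalize greatIcosaP t = P at *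
    generalize greatIcosaQ t = Q at *
    generalize t - 1 = a at *
    generalize 1 + 3 * t = b at *
    generalize -1 - 4 * t + t ^ 2 = f at *
    generalize 1 + t = d at *
    generalize -1 + 3 * t = e at *
    generalize 1 + 3 * t ^ 2 = h at *
    field_simp
    ring
  have hX' := hX.self_of_nhds.deriv
  have hne := hX' ▸ hdx
  have hslope : deriv greatIcosaY s / deriv greatIcosaX s = greatIcosaSlope s := by
    rw [hX', hY.self_of_nhds.deriv, mul_div_cancel_left₀ _ hne]
  rw [hslope]
  refine painleveVI_of_factored h0 ha hb hc hd he hf hg hh hj hu hv hP hx hx1' hy hy1' hyx' rfl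
    ?_ (greatIcosa_numerator_identity s rfl rfl rfl rfl rfl rfl rfl rfl rfl rfl rfl rfl rfl)
  rw [parametric_second_deriv hX hY ?_ (hasDerivAt_greatIcosaSlope h0 ha hb hh hP) hne]
  · generalize greatIcosaP s = P at *
    generalize greatIcosaR s = R at *
    generalize s - 1 = a at *
    generalize 1 + 3 * s = b at *
    generalize -1 - 4 * s + s ^ 2 = f at *
    generalize 1 + s = d at *
    generalize -1 + 3 * s = e at *
    generalize 1 + 3 * s ^ 2 = h at *
    field_simp
    ring
  · have hden : (1 + s) ^ 6 * (-1 + 3 * s) ^ 4 * (-1 - 4 * s + s ^ 2) ^ 2 ≠ 0 :=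
      mul_ne_zero (mul_ne_zero (pow_ne_zero 6 hd) (pow_ne_zero 4 he)) (pow_ne_zero 2 hf)
    exact DifferentiableAt.fun_div (by fun_prop) (by fun_prop) hden
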